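/- arXiv:2409.16026 — 2 statements merged into one kernel-verified Lean document; each statement's English description precedes it below -/
import Mathlib

section
/- For every integer k ≥ 0 and every real number z with |z| < 1, Σ_{n=1}^∞ (2n)^{k-1}(2z)^{2n} / C(2n,n) = z/(1-z²)^{k+1/2} · ( z·√(1-z²)·p_{k-1}(z²) + arcsin(z)·q_{k-1}(z²) ). -/
open Polynomial

/-- Lehmer's polynomials `q_k(x)` for `k ≥ -1`, shifted so that `lehmerQ n = q_{n-1}`:
`q_{-1}(x) = 1` and `q_{k+1}(x) = (2(k+1)x+1) q_k(x) + 2x(1-x) q_k'(x)`. -/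
noncomputable def lehmerQ : ℕ → Polynomial ℝ
  | 0 => 1
  | n + 1 => (C (2 * (n : ℝ)) * X + 1) * lehmerQ n + (2 * X * (1 - X)) * derivative (lehmerQ n)

/-- Lehmer's polynomials `p_k(x)` for `k ≥ -1`, shifted so that `lehmerP n = p_{n-1}`:
`p_{-1}(x) = 0` and `p_{k+1}(x) = 2(kx+1) p_k(x) + 2x(1-x) p_k'(x) + q_k(x)`. -/
noncomputable def lehmerP : ℕ → Polynomial ℝ
  | 0 => 0
  | n + 1 => C 2 * (C ((n : ℝ) - 1) * X + 1) * lehmerP n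
      + (2 * X * (1 - X)) * derivative (lehmerP n) + lehmerQ n

open Filter Asymptotics

/-!
Dividing the series by `z` leaves `S_k(z) = ∑ (2n+2)^k b_n z^{2n+1}` with
`b_n = 4^n / ((2n+1) C(2n,n))`, so that `(z S_k)' = S_{k+1}`. The recursions for `p_k` and `q_k` say
that the closed forms obey the same relation, which reduces the claim to
`S_0(z) = arcsin z / √(1-z²)`; this holds because `(1-z²) S_0' = 1 + z S_0`, whence
`√(1-z²) S_0 - arcsin z` is constant.
-/

section PolynomialGrowth

variable {e : ℕ → ℕ} {j : ℕ}

lemma summable_mul_pow_of_isBigO {R : Type*} [NormedRing R] [NormOneClass R] [NormMulClass R]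
    [CompleteSpace R] {a : ℕ → R} (ha : a =O[atTop] fun n => ((n ^ j : ℕ) : R))
    (he : ∀ n, n ≤ e n) {z : R} (hz : ‖z‖ < 1) : Summable fun n => a n * z ^ e n := by
  refine .of_norm_bounded (summable_norm_mul_geometric_of_norm_lt_one' hz ha) fun n => ?_
  simp only [norm_mul, norm_pow]
  exact mul_le_mul_of_nonneg_left (pow_le_pow_of_le_one (norm_nonneg z) hz.le (he n))
    (norm_nonneg _)

lemma hasDerivAt_tsum_mul_pow_of_isBigO {𝕜 : Type*} [RCLike 𝕜] {a : ℕ → 𝕜}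
    (ha : (fun n => a n * ((e n : 𝕜) + 1)) =O[atTop] fun n => ((n ^ j : ℕ) : 𝕜))
    (he : ∀ n, n ≤ e n) {z : 𝕜} (hz : ‖z‖ < 1) :
    HasDerivAt (fun y => ∑' n, a n * y ^ (e n + 1)) (∑' n, a n * ((e n : 𝕜) + 1) * z ^ e n) z := by
  obtain ⟨r, hzr, hr⟩ := exists_between hz
  have hr₀ : 0 < r := (norm_nonneg z).trans_lt hzr
  have hsum : Summable fun n => ‖a n * ((e n : 𝕜) + 1) * (r : 𝕜) ^ n‖ :=
    summable_norm_mul_geometric_of_norm_lt_one' (by simpa [abs_of_pos hr₀] using hr) ha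
  refine hasDerivAt_tsum_of_isPreconnected (g := fun n y => a n * y ^ (e n + 1))
    (g' := fun n y => a n * ((e n : 𝕜) + 1) * y ^ e n) hsum Metric.isOpen_ball
    Metric.isPreconnected_ball (fun n y _ => ?_) (fun n y hy => ?_) (Metric.mem_ball_self hr₀)
    (by simp) (mem_ball_zero_iff.mpr hzr)
  · simpa [mul_assoc] using (hasDerivAt_pow (e n + 1) y).const_mul (a n)
  · have hyr : ‖y‖ < r := mem_ball_zero_iff.mp hy
    have hpow : ‖y‖ ^ e n ≤ r ^ n :=
      (pow_le_pow_left₀ (norm_nonneg y) hyr.le _).trans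
        (pow_le_pow_of_le_one hr₀.le hr.le (he n))
    simpa [abs_of_pos hr₀] using
      mul_le_mul_of_nonneg_left hpow (norm_nonneg (a n * ((e n : 𝕜) + 1)))

end PolynomialGrowth

section Coefficients

/-- The coefficient of `z ^ (2 * n + 1)` in the Taylor series of `arcsin z / √(1 - z²)`. -/
noncomputable def arcsinDivSqrtCoeff (n : ℕ) : ℝ :=
  4 ^ n / ((2 * n + 1) * Nat.centralBinom n)

lemma arcsinDivSqrtCoeff_zero : arcsinDivSqrtCoeff 0 = 1 := by
  simp [arcsinDivSqrtCoeff]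

lemma arcsinDivSqrtCoeff_nonneg (n : ℕ) : 0 ≤ arcsinDivSqrtCoeff n := by
  unfold arcsinDivSqrtCoeff
  positivity

lemma arcsinDivSqrtCoeff_le_one (n : ℕ) : arcsinDivSqrtCoeff n ≤ 1 := by
  have h := Nat.four_pow_le_two_mul_add_one_mul_central_binom n
  rw [← Nat.centralBinom_eq_two_mul_choose] at h
  exact div_le_one_of_le₀ (by exact_mod_cast h) (by positivity)

lemma four_pow_succ_div_centralBinom_succ (n : ℕ) :
    (4 : ℝ) ^ (n + 1) / Nat.centralBinom (n + 1) = 2 * (n + 1) * arcsinDivSqrtCoeff n := by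
  have hrec : ((n : ℝ) + 1) * Nat.centralBinom (n + 1) = 2 * (2 * n + 1) * Nat.centralBinom n := by
    exact_mod_cast Nat.succ_mul_centralBinom_succ n
  have h₀ : (Nat.centralBinom n : ℝ) ≠ 0 := by exact_mod_cast n.centralBinom_ne_zero
  have h₁ : (Nat.centralBinom (n + 1) : ℝ) ≠ 0 := by exact_mod_cast (n + 1).centralBinom_ne_zero
  rw [arcsinDivSqrtCoeff]
  field_simp
  linear_combination (-2 * 4 ^ n : ℝ) * hrec

lemma arcsinDivSqrtCoeff_succ_mul (n : ℕ) :
    arcsinDivSqrtCoeff (n + 1) * (2 * n + 3) = arcsinDivSqrtCoeff n * (2 * n + 2) := by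
  have h := four_pow_succ_div_centralBinom_succ n
  have h₃ : 2 * ((n : ℝ) + 1) + 1 ≠ 0 := by positivity
  rw [mul_comm (arcsinDivSqrtCoeff n), ← mul_add_one, ← h, arcsinDivSqrtCoeff]
  push_cast
  field_simp
  ring

lemma isBigO_pow_mul_arcsinDivSqrtCoeff (k : ℕ) :
    (fun n : ℕ => (2 * ((n : ℝ) + 1)) ^ k * arcsinDivSqrtCoeff n)
      =O[atTop] fun n => ((n ^ k : ℕ) : ℝ) := by
  have hlin : (fun n : ℕ => 2 * ((n : ℝ) + 1)) =O[atTop] fun n => (n : ℝ) := by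
    refine .of_bound 4 ((eventually_ge_atTop 1).mono fun n hn => ?_)
    have hn' : (1 : ℝ) ≤ n := by exact_mod_cast hn
    rw [Real.norm_of_nonneg (by positivity), Real.norm_of_nonneg (by positivity)]
    linarith
  have hbdd : arcsinDivSqrtCoeff =O[atTop] fun _ => (1 : ℝ) :=
    .of_norm_le fun n => by
      simpa [abs_of_nonneg (arcsinDivSqrtCoeff_nonneg n)] using arcsinDivSqrtCoeff_le_one n
  simpa using (hlin.pow k).mul hbdd

lemma isBigO_arcsinDivSqrtCoeff_mul :
    (fun n : ℕ => arcsinDivSqrtCoeff n * (((2 * n : ℕ) : ℝ) + 1))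
      =O[atTop] fun n => ((n ^ 1 : ℕ) : ℝ) := by
  refine .trans (.of_norm_le fun n => ?_) (isBigO_pow_mul_arcsinDivSqrtCoeff 1)
  have hb := arcsinDivSqrtCoeff_nonneg n
  rw [Real.norm_of_nonneg (by positivity)]
  push_cast
  linarith

end Coefficients

section Derivatives

variable {z : ℝ}

lemma one_sub_sq_pos (hz : |z| < 1) : 0 < 1 - z ^ 2 :=
  sub_pos.mpr ((sq_lt_one_iff_abs_lt_one z).mpr hz)

lemma hasDerivAt_arcsin_of_abs_lt_one (hz : |z| < 1) :
    HasDerivAt Real.arcsin (1 / √(1 - z ^ 2)) z :=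
  Real.hasDerivAt_arcsin (abs_lt.mp hz).1.ne' (abs_lt.mp hz).2.ne

lemma hasDerivAt_one_sub_sq (z : ℝ) : HasDerivAt (fun y : ℝ => 1 - y ^ 2) (-(2 * z)) z := by
  simpa using (hasDerivAt_pow 2 z).const_sub 1

lemma hasDerivAt_sqrt_one_sub_sq (hz : |z| < 1) :
    HasDerivAt (fun y : ℝ => √(1 - y ^ 2)) (-z / √(1 - z ^ 2)) z :=
  ((hasDerivAt_one_sub_sq z).sqrt (one_sub_sq_pos hz).ne').congr_deriv (by ring)

lemma hasDerivAt_one_sub_sq_rpow (c : ℝ) (hz : |z| < 1) :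
    HasDerivAt (fun y : ℝ => (1 - y ^ 2) ^ c) (-(2 * z) * c * (1 - z ^ 2) ^ (c - 1)) z :=
  (hasDerivAt_one_sub_sq z).rpow_const (.inl (one_sub_sq_pos hz).ne')

lemma hasDerivAt_eval_sq (p : ℝ[X]) (z : ℝ) :
    HasDerivAt (fun y : ℝ => p.eval (y ^ 2)) (2 * z * (derivative p).eval (z ^ 2)) z := by
  simpa [Function.comp_def, mul_comm] using (p.hasDerivAt (z ^ 2)).comp z (hasDerivAt_pow 2 z)

end Derivatives

section ArcsinDivSqrt

variable {z : ℝ}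

lemma one_sub_sq_mul_tsum_arcsinDivSqrtCoeff (hz : |z| < 1) :
    (1 - z ^ 2) * ∑' n, arcsinDivSqrtCoeff n * (((2 * n : ℕ) : ℝ) + 1) * z ^ (2 * n) =
      1 + z * ∑' n, arcsinDivSqrtCoeff n * z ^ (2 * n + 1) := by
  set g : ℕ → ℝ := fun n => arcsinDivSqrtCoeff n * (((2 * n : ℕ) : ℝ) + 1) * z ^ (2 * n) with hg
  have hg_summable : Summable g :=
    summable_mul_pow_of_isBigO isBigO_arcsinDivSqrtCoeff_mul (fun n => by lia) hz
  have hb_summable : Summable fun n => arcsinDivSqrtCoeff n * z ^ (2 * n + 1) :=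
    summable_mul_pow_of_isBigO (j := 0) (by simpa using isBigO_pow_mul_arcsinDivSqrtCoeff 0)
      (fun n => by lia) hz
  have hg_zero : g 0 = 1 := by simp [hg, arcsinDivSqrtCoeff_zero]
  have hg_succ (n : ℕ) :
      g (n + 1) = z ^ 2 * g n + z * (arcsinDivSqrtCoeff n * z ^ (2 * n + 1)) := by
    simp only [hg]
    push_cast
    linear_combination z ^ (2 * n + 2) * arcsinDivSqrtCoeff_succ_mul n
  have hsplit : ∑' n, g n =
      1 + (z ^ 2 * ∑' n, g n + z * ∑' n, arcsinDivSqrtCoeff n * z ^ (2 * n + 1)) := by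
    conv_lhs => rw [hg_summable.tsum_eq_zero_add, hg_zero, tsum_congr hg_succ,
      (hg_summable.mul_left _).tsum_add (hb_summable.mul_left _), tsum_mul_left, tsum_mul_left]
  linear_combination hsplit

lemma tsum_arcsinDivSqrtCoeff (hz : |z| < 1) :
    ∑' n, arcsinDivSqrtCoeff n * z ^ (2 * n + 1) = Real.arcsin z / √(1 - z ^ 2) := by
  set S : ℝ → ℝ := fun y => ∑' n, arcsinDivSqrtCoeff n * y ^ (2 * n + 1) with hS
  have hderiv : ∀ y ∈ Metric.ball (0 : ℝ) 1,
      HasDerivAt (fun y => √(1 - y ^ 2) * S y - Real.arcsin y) 0 y := by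
    intro y hy
    replace hy : |y| < 1 := mem_ball_zero_iff.mp hy
    have hs := (Real.sqrt_pos.mpr (one_sub_sq_pos hy)).ne'
    refine (((hasDerivAt_sqrt_one_sub_sq hy).mul (hasDerivAt_tsum_mul_pow_of_isBigO
      isBigO_arcsinDivSqrtCoeff_mul (fun n => by lia) hy)).sub
      (hasDerivAt_arcsin_of_abs_lt_one hy)).congr_deriv ?_
    field_simp
    rw [Real.sq_sqrt (one_sub_sq_pos hy).le]
    linear_combination one_sub_sq_mul_tsum_arcsinDivSqrtCoeff hy
  have hconst := Metric.isOpen_ball.is_const_of_deriv_eq_zero Metric.isPreconnected_ball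
    (fun y hy => (hderiv y hy).differentiableAt.differentiableWithinAt)
    (fun y hy => (hderiv y hy).deriv) (mem_ball_zero_iff.mpr hz) (Metric.mem_ball_self one_pos)
  have hS_zero : S 0 = 0 := by simp [hS]
  rw [eq_div_iff (Real.sqrt_pos.mpr (one_sub_sq_pos hz)).ne', mul_comm]
  simpa [hS_zero, sub_eq_zero] using hconst

end ArcsinDivSqrt

section ClosedForm

/-- The second factor in Lehmer's formula, where `lehmerNumerator k` uses `p_{k-1}` and
`q_{k-1}`. -/
noncomputable def lehmerNumerator (k : ℕ) (z : ℝ) : ℝ :=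
  z * √(1 - z ^ 2) * (lehmerP k).eval (z ^ 2) + Real.arcsin z * (lehmerQ k).eval (z ^ 2)

/-- The right-hand side of Lehmer's formula divided by `z`. Leaving out this factor makes
differentiation of `z * lehmerSum k z` raise `k` by one, with no exception at `z = 0`. -/
noncomputable def lehmerSum (k : ℕ) (z : ℝ) : ℝ :=
  (1 - z ^ 2) ^ (-((k : ℝ) + 1 / 2)) * lehmerNumerator k z

variable {z : ℝ}

lemma hasDerivAt_lehmerNumerator (k : ℕ) (hz : |z| < 1) :
    HasDerivAt (lehmerNumerator k)
      (√(1 - z ^ 2) *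
          ((lehmerP k).eval (z ^ 2) + 2 * z ^ 2 * (derivative (lehmerP k)).eval (z ^ 2)) +
        ((lehmerQ k).eval (z ^ 2) - z ^ 2 * (lehmerP k).eval (z ^ 2)) / √(1 - z ^ 2) +
        2 * z * Real.arcsin z * (derivative (lehmerQ k)).eval (z ^ 2)) z := by
  refine ((((hasDerivAt_id' z).mul (hasDerivAt_sqrt_one_sub_sq hz)).mul
    (hasDerivAt_eval_sq (lehmerP k) z)).add ((hasDerivAt_arcsin_of_abs_lt_one hz).mul
      (hasDerivAt_eval_sq (lehmerQ k) z))).congr_deriv ?_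
  simp only [Pi.mul_apply]
  ring

lemma lehmerNumerator_succ (k : ℕ) (hz : |z| < 1) :
    lehmerNumerator (k + 1) z =
      (1 - z ^ 2) * (lehmerNumerator k z + z * deriv (lehmerNumerator k) z) +
        (2 * k + 1) * z ^ 2 * lehmerNumerator k z := by
  have hdiv (c : ℝ) : (1 - z ^ 2) * (c / √(1 - z ^ 2)) = c * √(1 - z ^ 2) := by
    rw [mul_div_left_comm, Real.div_sqrt]
  rw [(hasDerivAt_lehmerNumerator k hz).deriv]
  simp only [lehmerNumerator, lehmerP, lehmerQ, eval_add, eval_mul, eval_sub, eval_C, eval_X,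
    eval_one, eval_ofNat]
  linear_combination (-z) *
    hdiv ((lehmerQ k).eval (z ^ 2) - z ^ 2 * (lehmerP k).eval (z ^ 2))

lemma hasDerivAt_mul_lehmerSum (k : ℕ) (hz : |z| < 1) :
    HasDerivAt (fun y => y * lehmerSum k y) (lehmerSum (k + 1) z) z := by
  have hd := (hasDerivAt_lehmerNumerator k hz).differentiableAt.hasDerivAt
  have hw := one_sub_sq_pos hz
  refine ((hasDerivAt_id' z).mul ((hasDerivAt_one_sub_sq_rpow _ hz).mul hd)).congr_deriv ?_
  have hpow : (1 - z ^ 2) ^ (-((k : ℝ) + 1 / 2)) =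
      (1 - z ^ 2) ^ (-((k : ℝ) + 1 / 2) - 1) * (1 - z ^ 2) := by
    rw [← Real.rpow_add_one hw.ne', sub_add_cancel]
  have hexp : -(((k + 1 : ℕ) : ℝ) + 1 / 2) = -((k : ℝ) + 1 / 2) - 1 := by push_cast; ring
  rw [lehmerSum, hexp, lehmerNumerator_succ k hz, Pi.mul_apply, hpow]
  ring

lemma hasSum_lehmerSum (k : ℕ) (hz : |z| < 1) :
    HasSum (fun n : ℕ => (2 * ((n : ℝ) + 1)) ^ k * arcsinDivSqrtCoeff n * z ^ (2 * n + 1))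
      (lehmerSum k z) := by
  refine (summable_mul_pow_of_isBigO (isBigO_pow_mul_arcsinDivSqrtCoeff k)
    (fun n => by lia) hz).hasSum_iff.mpr ?_
  induction k generalizing z with
  | zero =>
    rw [lehmerSum, Real.rpow_neg (one_sub_sq_pos hz).le]
    simp [lehmerNumerator, lehmerP, lehmerQ, tsum_arcsinDivSqrtCoeff hz, Real.sqrt_eq_rpow,
      div_eq_inv_mul]
  | succ k ih =>
    have hcoeff (n : ℕ) : (2 * ((n : ℝ) + 1)) ^ k * arcsinDivSqrtCoeff n *
        (((2 * n + 1 : ℕ) : ℝ) + 1) = (2 * ((n : ℝ) + 1)) ^ (k + 1) * arcsinDivSqrtCoeff n := by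
      push_cast
      ring
    have hseries := hasDerivAt_tsum_mul_pow_of_isBigO (e := fun n => 2 * n + 1)
      ((isBigO_pow_mul_arcsinDivSqrtCoeff (k + 1)).congr_left fun n => (hcoeff n).symm)
      (fun n => by lia) hz
    simp only [hcoeff] at hseries
    refine hseries.unique ((hasDerivAt_mul_lehmerSum k hz).congr_of_eventuallyEq ?_)
    filter_upwards [(isOpen_lt continuous_abs continuous_const).mem_nhds hz] with y hy
    rw [← ih hy, ← tsum_mul_left]
    exact tsum_congr fun n => by ring

end ClosedForm

/-- **Lehmer.** For every integer `k ≥ 0` and real `z` with `|z| < 1`,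
`∑_{n=1}^∞ (2n)^{k-1} (2z)^{2n} / C(2n,n)
  = z/(1-z²)^{k+1/2} ( z √(1-z²) p_{k-1}(z²) + arcsin(z) q_{k-1}(z²) )`. -/
theorem lehmer_negative_integer_values (k : ℕ) (z : ℝ) (hz : |z| < 1) :
    ∑' n : ℕ, (2 * ((n : ℝ) + 1)) ^ ((k : ℤ) - 1) * (2 * z) ^ (2 * (n + 1)) /
        (Nat.centralBinom (n + 1) : ℝ) =
      z / (1 - z ^ 2) ^ ((k : ℝ) + 1 / 2) *
        (z * Real.sqrt (1 - z ^ 2) * (lehmerP k).eval (z ^ 2) +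
          Real.arcsin z * (lehmerQ k).eval (z ^ 2)) := by
  calc
    _ = ∑' n : ℕ, z * ((2 * ((n : ℝ) + 1)) ^ k * arcsinDivSqrtCoeff n * z ^ (2 * n + 1)) :=
      tsum_congr fun n => by
        have h : 2 * ((n : ℝ) + 1) ≠ 0 := by positivity
        rw [mul_pow 2 z, pow_mul 2, mul_div_assoc, mul_div_right_comm, zpow_sub_one₀ h,
          zpow_natCast, show (2 : ℝ) ^ 2 = 4 by norm_num, four_pow_succ_div_centralBinom_succ]
        field_simp
        ring
    _ = z * lehmerSum k z := by rw [tsum_mul_left, (hasSum_lehmerSum k hz).tsum_eq]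
    _ = _ := by
      rw [lehmerSum, lehmerNumerator, Real.rpow_neg (one_sub_sq_pos hz).le, ← mul_assoc,
        ← div_eq_mul_inv]
end

section
/- For every integer k ≥ 1, every real number a not of the form -j/2 with j a nonnegative integer, and every real z with 0 < z < 1: Φ_HCB(1-k,a,z) = (4^a / (C(2a,a)·a^{1-k})) · z^{2a} · _{k+1}F_k(1, a+1, …, a+1 ; a+1/2, a, …, a ; z²), where the upper parameter list consists of 1 followed by k copies of a+1, and the lower parameter list consists of a+1/2 followed by k-1 copies of a. -/
/-- The generalized binomial coefficient `C(x,y) = Γ(x+1)/(Γ(y+1) Γ(x-y+1))`. -/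
noncomputable def genBinom (x y : ℝ) : ℝ :=
  Real.Gamma (x + 1) / (Real.Gamma (y + 1) * Real.Gamma (x - y + 1))

/-- The Hurwitz–Lerch type central binomial series
`Φ_HCB(s,a,z) = ∑_{n≥0} (2z)^{2(n+a)} / ( C(2(n+a), n+a) (n+a)^s )`. -/
noncomputable def PhiHCB (s : ℤ) (a z : ℝ) : ℝ :=
  ∑' n : ℕ, (2 * z) ^ (2 * ((n : ℝ) + a)) /
    (genBinom (2 * ((n : ℝ) + a)) ((n : ℝ) + a) * ((n : ℝ) + a) ^ s)

/-- The shifted factorial (Pochhammer symbol) `(α)_n = α(α+1)⋯(α+n-1)`, `(α)_0 = 1`. -/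
def poch (α : ℝ) : ℕ → ℝ
  | 0 => 1
  | n + 1 => poch α n * (α + n)

/-- The generalized hypergeometric series with upper parameters `as`, lower parameters `bs`:
`∑_{n≥0} (∏_{α ∈ as} (α)_n) / ((∏_{β ∈ bs} (β)_n) n!) zⁿ`. -/
noncomputable def pFq (as bs : List ℝ) (z : ℝ) : ℝ :=
  ∑' n : ℕ, (as.map fun α => poch α n).prod / ((bs.map fun β => poch β n).prod *
    (Nat.factorial n : ℝ)) * z ^ n

/-!
Legendre's duplication formula turns the central binomial coefficient into a quotient of Gamma
functions: `4 ^ x / C(2x, x) = √π Γ(x + 1) / Γ(x + 1/2)`. Shifting `x` from `a` to `a + n`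
multiplies this by `(a + 1)_n / (a + 1/2)_n`, while `(a + n) / a = (a + 1)_n / (a)_n`. So each term
of the series is its initial term times a quotient of shifted factorials, for every integer `s`;
when `s = 1 - k ≤ 0` this quotient is a hypergeometric term, with the upper parameter `1` cancelling
the factorial.
-/

open Real

theorem poch_eq_ascPochhammer_eval (α : ℝ) (n : ℕ) : poch α n = (ascPochhammer ℝ n).eval α := by
  induction n with
  | zero => simp [poch]
  | succ n ih => rw [poch, ih, ascPochhammer_succ_eval]

theorem poch_one (n : ℕ) : poch 1 n = n.factorial := by
  rw [poch_eq_ascPochhammer_eval, ascPochhammer_eval_one]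

theorem poch_ne_zero {α : ℝ} (hα : ∀ m : ℕ, α ≠ -m) (n : ℕ) : poch α n ≠ 0 := by
  rw [poch_eq_ascPochhammer_eval, ne_eq, ascPochhammer_eval_eq_zero_iff]
  rintro ⟨m, -, hm⟩
  exact hα m (neg_eq_iff_eq_neg.mp hm.symm)

theorem mul_poch_add_one (α : ℝ) (n : ℕ) : α * poch (α + 1) n = poch α n * (α + n) := by
  induction n with
  | zero => simp [poch]
  | succ n ih =>
    rw [poch, poch, ← mul_assoc, ih, Nat.cast_succ]
    ring

theorem poch_div_poch_add_one {α : ℝ} (hα : ∀ m : ℕ, α ≠ -m) (n : ℕ) :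
    poch α n / poch (α + 1) n = α / (α + n) := by
  have hn : α + n ≠ 0 := fun h => hα n (eq_neg_of_add_eq_zero_left h)
  have hpoch : poch (α + 1) n ≠ 0 :=
    poch_ne_zero (fun m h => hα (m + 1) (by push_cast; linarith)) n
  rw [div_eq_div_iff hpoch hn, mul_poch_add_one]

theorem Gamma_add_natCast_eq_mul_poch {α : ℝ} (hα : ∀ m : ℕ, α ≠ -m) (n : ℕ) :
    Gamma (α + n) = Gamma α * poch α n := by
  induction n with
  | zero => simp [poch]
  | succ n ih =>
    have hn : α + n ≠ 0 := fun h => hα n (eq_neg_of_add_eq_zero_left h)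
    rw [Nat.cast_succ, ← add_assoc, Gamma_add_one hn, ih, poch]
    ring

theorem pFq_one_cons (as bs : List ℝ) (z : ℝ) :
    pFq (1 :: as) bs z =
      ∑' n : ℕ, (as.map fun α => poch α n).prod / (bs.map fun β => poch β n).prod * z ^ n := by
  refine tsum_congr fun n => ?_
  have hfact : (n.factorial : ℝ) ≠ 0 := mod_cast n.factorial_ne_zero
  rw [List.map_cons, List.prod_cons, poch_one, mul_comm (n.factorial : ℝ),
    mul_div_mul_right _ _ hfact]

theorem genBinom_two_mul_self (x : ℝ) :
    genBinom (2 * x) x = (4 : ℝ) ^ x * Gamma (x + 1 / 2) / (√π * Gamma (x + 1)) := by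
  have hfour : (2 : ℝ) ^ (1 - (2 * x + 1)) = ((4 : ℝ) ^ x)⁻¹ := by
    rw [show 1 - (2 * x + 1) = -(2 * x) by ring, rpow_neg zero_le_two, rpow_mul zero_le_two]
    norm_num
  have hduplication : Gamma (x + 1 / 2) * Gamma (x + 1) =
      Gamma (2 * x + 1) * ((4 : ℝ) ^ x)⁻¹ * √π := by
    have h := Gamma_mul_Gamma_add_half (x + 1 / 2)
    rwa [add_assoc, add_halves, show 2 * (x + 1 / 2) = 2 * x + 1 by ring, hfour] at h
  rw [genBinom, show 2 * x - x + 1 = x + 1 by ring]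
  by_cases hΓ : Gamma (x + 1) = 0
  -- At the poles, `Real.Gamma` takes the value `0`, so both sides are divisions by zero.
  · simp [hΓ]
  · rw [div_eq_div_iff (by positivity) (by positivity), mul_assoc (_ ^ _),
      ← mul_assoc (Gamma (x + 1 / 2)), hduplication]
    field_simp

theorem four_rpow_div_genBinom_two_mul_self (x : ℝ) :
    (4 : ℝ) ^ x / genBinom (2 * x) x = √π * (Gamma (x + 1) / Gamma (x + 1 / 2)) := by
  rw [genBinom_two_mul_self, div_div_eq_mul_div, mul_div_mul_left _ _ (by positivity),
    mul_div_assoc]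

theorem four_rpow_div_genBinom_add_natCast {a : ℝ} (h₁ : ∀ m : ℕ, a + 1 ≠ -m)
    (h₂ : ∀ m : ℕ, a + 1 / 2 ≠ -m) (n : ℕ) :
    (4 : ℝ) ^ (n + a) / genBinom (2 * (n + a)) (n + a) =
      (4 : ℝ) ^ a / genBinom (2 * a) a * (poch (a + 1) n / poch (a + 1 / 2) n) := by
  simp only [four_rpow_div_genBinom_two_mul_self, add_assoc (n : ℝ) a,
    add_comm (n : ℝ) (a + _), Gamma_add_natCast_eq_mul_poch h₁,
    Gamma_add_natCast_eq_mul_poch h₂, mul_div_mul_comm, mul_assoc]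

theorem two_mul_rpow_two_mul_natCast_add {z : ℝ} (hz : 0 < z) (a : ℝ) (n : ℕ) :
    (2 * z) ^ (2 * (n + a)) = (4 : ℝ) ^ (n + a) * (z ^ (2 * a) * (z ^ 2) ^ n) := by
  have hsq : (2 * z) ^ (2 : ℝ) = 4 * z ^ 2 := by
    rw [rpow_two]
    ring
  rw [rpow_mul (by positivity), hsq, mul_rpow (by positivity) (by positivity), add_comm (n : ℝ),
    rpow_add_natCast (pow_pos hz 2).ne', rpow_mul hz.le, rpow_two]

theorem phiHCB_eq_mul_tsum (s : ℤ) {a z : ℝ} (ha : ∀ j : ℕ, a ≠ -(j : ℝ) / 2) (hz : 0 < z) :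
    PhiHCB s a z = (4 : ℝ) ^ a / (genBinom (2 * a) a * a ^ s) * z ^ (2 * a) *
      ∑' n : ℕ, poch (a + 1) n / poch (a + 1 / 2) n * (poch a n / poch (a + 1) n) ^ s *
        (z ^ 2) ^ n := by
  have h₀ (m : ℕ) : a ≠ -m := fun h => ha (2 * m) (by push_cast; linarith)
  have h₁ (m : ℕ) : a + 1 ≠ -m := fun h => ha (2 * m + 2) (by push_cast; linarith)
  have h₂ (m : ℕ) : a + 1 / 2 ≠ -m := fun h => ha (2 * m + 1) (by push_cast; linarith)
  rw [PhiHCB, ← tsum_mul_left]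
  refine tsum_congr fun n => ?_
  have hlinear : ((n : ℝ) + a)⁻¹ = a⁻¹ * (poch a n / poch (a + 1) n) := by
    rw [poch_div_poch_add_one h₀ n, inv_mul_eq_div,
      div_div_cancel_left' (by simpa using h₀ 0), add_comm]
  calc (2 * z) ^ (2 * ((n : ℝ) + a)) / (genBinom (2 * (n + a)) (n + a) * ((n : ℝ) + a) ^ s)
    _ = (4 : ℝ) ^ ((n : ℝ) + a) / genBinom (2 * (n + a)) (n + a) * ((n : ℝ) + a)⁻¹ ^ s *
          (z ^ (2 * a) * (z ^ 2) ^ n) := by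
      rw [two_mul_rpow_two_mul_natCast_add hz, inv_zpow]
      ring
    _ = (4 : ℝ) ^ a / genBinom (2 * a) a * (poch (a + 1) n / poch (a + 1 / 2) n) *
          (a⁻¹ * (poch a n / poch (a + 1) n)) ^ s * (z ^ (2 * a) * (z ^ 2) ^ n) := by
      rw [four_rpow_div_genBinom_add_natCast h₁ h₂, hlinear]
    _ = _ := by
      rw [mul_zpow, inv_zpow]
      ring

/-- For every integer `k ≥ 1`, real `a` not of the form `-j/2` (`j ∈ ℤ_{≥0}`), and `0 < z < 1`:
`Φ_HCB(1-k,a,z) = (4^a/(C(2a,a) a^{1-k})) z^{2a}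
  ⬝ _{k+1}F_k(1, a+1, …, a+1 ; a+1/2, a, …, a ; z²)`,
where the upper parameters are `1` followed by `k` copies of `a+1` and the lower parameters are
`a+1/2` followed by `k-1` copies of `a`. -/
theorem phiHCB_nonpos_hypergeometric (k : ℕ) (hk : 1 ≤ k) (a : ℝ)
    (ha : ∀ j : ℕ, a ≠ -(j : ℝ) / 2) (z : ℝ) (hz0 : 0 < z) (hz1 : z < 1) :
    PhiHCB (1 - k) a z =
      (4 : ℝ) ^ a / (genBinom (2 * a) a * a ^ ((1 : ℤ) - k)) * z ^ (2 * a) *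
        pFq ((1 : ℝ) :: List.replicate k (a + 1))
          ((a + 1 / 2) :: List.replicate (k - 1) a) (z ^ 2) := by
  obtain ⟨m, rfl⟩ := Nat.exists_eq_add_of_le' hk
  rw [phiHCB_eq_mul_tsum _ ha hz0, pFq_one_cons]
  congr 1
  refine tsum_congr fun n => ?_
  have hexp : (1 : ℤ) - (m + 1 : ℕ) = -m := by push_cast; ring
  simp only [hexp, zpow_neg, zpow_natCast, List.map_cons, List.map_replicate, List.prod_cons,
    List.prod_replicate, Nat.add_sub_cancel]
  rw [← inv_pow, inv_div, div_pow, div_mul_div_comm, ← pow_succ']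
end
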